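/- For every n-qudit state ρ: D(ρ‖M(ρ)) = H(M(ρ)) − H(ρ), and for every MSPS σ one has D(ρ‖M(ρ)) ≤ D(ρ‖σ); that is, the mean state M(ρ) is a closest MSPS to ρ in relative entropy. -/

import Mathlib

open scoped BigOperators ComplexOrder Classical ENNReal
open Matrix

namespace PaperQI

/-- The computational-basis index set `ℤ_d^n` for an `n`-qudit system. -/
abbrev QV (d n : ℕ) := Fin n → ZMod d

/-- Matrices (linear operators) on the `n`-qudit Hilbert space `(ℂ^d)^{⊗ n}`,
written in the computational basis indexed by `ℤ_d^n`. -/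
abbrev Mat (d n : ℕ) := Matrix (QV d n) (QV d n) ℂ

/-- The character `ξ^z = exp(2πi z/d)` for `z ∈ ℤ_d`. -/
noncomputable def ch (d : ℕ) (z : ZMod d) : ℂ :=
  Complex.exp (2 * Real.pi * Complex.I * (z.val : ℂ) / (d : ℂ))

/-- Dot product on `ℤ_d^n`. -/
def qdot {d n : ℕ} (p k : QV d n) : ZMod d := ∑ i, p i * k i

/-- The `n`-qudit Weyl operator `w(p,q) = ⊗_i ξ^{-2⁻¹ p_i q_i} Z^{p_i} X^{q_i}`
(for odd prime `d`).  Its matrix entries are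
`w(p,q)[k+q, k] = ξ^{p·k + 2⁻¹ p·q}`. -/
noncomputable def weyl (d n : ℕ) [Fact (Nat.Prime d)] (p q : QV d n) : Mat d n :=
  Matrix.of fun k' k =>
    if k' = k + q then ch d (qdot p k + (2 : ZMod d)⁻¹ * qdot p q) else 0

/-- `ρ` is an `n`-qudit state: positive semidefinite with trace one. -/
def IsState (d n : ℕ) [Fact (Nat.Prime d)] (ρ : Mat d n) : Prop :=
  ρ.PosSemidef ∧ ρ.trace = 1

/-- The characteristic function `Ξ_ρ(p,q) = Tr[ρ w(-p,-q)]`. -/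
noncomputable def xi (d n : ℕ) [Fact (Nat.Prime d)] (ρ : Mat d n)
    (pq : QV d n × QV d n) : ℂ :=
  (ρ * weyl d n (-pq.1) (-pq.2)).trace

/-- The mean state `M(ρ) = d^{-n} ∑_{|Ξ_ρ(p,q)| = 1} Ξ_ρ(p,q) w(p,q)`. -/
noncomputable def meanState (d n : ℕ) [Fact (Nat.Prime d)] (ρ : Mat d n) : Mat d n :=
  ((d : ℂ) ^ n)⁻¹ •
    ∑ pq : QV d n × QV d n,
      if ‖xi d n ρ pq‖ = 1 then xi d n ρ pq • weyl d n pq.1 pq.2 else 0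

/-- `ρ` is a minimal stabilizer-projection state (MSPS): for some `r ≤ n` there are
mutually commuting Weyl operators `w(p_i,q_i)`, `i = 1,…,r`, whose labels generate a
subgroup of `V^n` of order `d^r`, and phases `x ∈ ℤ_d^r`, such that
`ρ = d^{-(n-r)} ∏_i ( (1/d) ∑_{k ∈ ℤ_d} (ξ^{x_i} w(p_i,q_i))^k )`. -/
noncomputable def IsMSPS (d n : ℕ) [Fact (Nat.Prime d)] (ρ : Mat d n) : Prop :=
  ∃ r : ℕ, r ≤ n ∧
    ∃ (p q : Fin r → QV d n) (x : Fin r → ZMod d),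
      (∀ i j, Commute (weyl d n (p i) (q i)) (weyl d n (p j) (q j))) ∧
      Nat.card (AddSubgroup.closure (Set.range fun i => (p i, q i)) :
        AddSubgroup (QV d n × QV d n)) = d ^ r ∧
      ρ = ((d : ℂ) ^ (n - r))⁻¹ •
        (List.ofFn fun i =>
          (d : ℂ)⁻¹ • ∑ k : ZMod d, (ch d (x i) • weyl d n (p i) (q i)) ^ k.val).prod

/-- The magic gap `MG(ρ) = 1 - max{|Ξ_ρ(p,q)| : Ξ_ρ(p,q) ≠ 0, |Ξ_ρ(p,q)| ≠ 1}`,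
and `MG(ρ) = 0` if this set is empty. -/
noncomputable def magicGap (d n : ℕ) [Fact (Nat.Prime d)] (ρ : Mat d n) : ℝ :=
  let s : Finset ℝ :=
    (Finset.univ.filter fun pq : QV d n × QV d n =>
      xi d n ρ pq ≠ 0 ∧ ‖xi d n ρ pq‖ ≠ 1).image
      fun pq => ‖xi d n ρ pq‖
  if h : s.Nonempty then 1 - s.max' h else 0

/-- Von Neumann entropy `H(ρ) = -∑ λ_i log λ_i` (natural log, eigenvalues of `ρ`),
with the convention `0 log 0 = 0`; junk value `0` on non-Hermitian matrices. -/
noncomputable def vnEnt {d n : ℕ} [Fact (Nat.Prime d)] (ρ : Mat d n) : ℝ :=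
  if h : ρ.IsHermitian then -∑ i, h.eigenvalues i * Real.log (h.eigenvalues i) else 0

/-- Rényi entropy `H_α` for `α ∈ [0,∞]`:  `H_0 = log rank`, `H_1 = H` (von Neumann),
`H_∞ = -log λ_max`, and `H_α = (1-α)⁻¹ log ∑ λ_i^α` otherwise. -/
noncomputable def renyiEnt {d n : ℕ} [Fact (Nat.Prime d)] (α : ℝ≥0∞) (ρ : Mat d n) : ℝ :=
  if h : ρ.IsHermitian then
    if α = 0 then Real.log (ρ.rank : ℝ)
    else if α = 1 then -∑ i, h.eigenvalues i * Real.log (h.eigenvalues i)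
    else if α = ⊤ then -Real.log (⨆ i, h.eigenvalues i)
    else (1 - α.toReal)⁻¹ * Real.log (∑ i, h.eigenvalues i ^ α.toReal)
  else 0

/-- Matrix logarithm on the support: `log ρ = U diag(log λ_i) U†` via the spectral
decomposition, with `log 0 = 0` on the kernel; junk value `0` off Hermitian matrices. -/
noncomputable def matLog {d n : ℕ} [Fact (Nat.Prime d)] (ρ : Mat d n) : Mat d n :=
  if h : ρ.IsHermitian then
    (h.eigenvectorUnitary : Mat d n) *
      Matrix.diagonal (fun i => (Real.log (h.eigenvalues i) : ℂ)) *
      star (h.eigenvectorUnitary : Mat d n)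
  else 0

/-- Matrix real power on the support: `ρ^t = U diag(λ_i^t) U†`, with `0^t = 0` on the
kernel (for `t ≠ 0`); junk value `0` off Hermitian matrices. -/
noncomputable def matRpow {d n : ℕ} [Fact (Nat.Prime d)] (ρ : Mat d n) (t : ℝ) : Mat d n :=
  if h : ρ.IsHermitian then
    (h.eigenvectorUnitary : Mat d n) *
      Matrix.diagonal (fun i => ((h.eigenvalues i ^ t : ℝ) : ℂ)) *
      star (h.eigenvectorUnitary : Mat d n)
  else 0

/-- Support inclusion `supp ρ ⊆ supp σ`, expressed as `ker σ ⊆ ker ρ`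
(the correct notion for positive semidefinite matrices). -/
def suppLE {d n : ℕ} [Fact (Nat.Prime d)] (ρ σ : Mat d n) : Prop :=
  ∀ v : QV d n → ℂ, σ.mulVec v = 0 → ρ.mulVec v = 0

/-- Relative entropy `D(ρ‖σ) = Tr[ρ(log ρ - log σ)]` when `supp ρ ⊆ supp σ`, else `+∞`. -/
noncomputable def relEnt {d n : ℕ} [Fact (Nat.Prime d)] (ρ σ : Mat d n) : EReal :=
  if suppLE ρ σ then (((ρ * (matLog ρ - matLog σ)).trace.re : ℝ) : EReal) else ⊤

/-- Sandwiched Rényi relative entropy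
`D_α(ρ‖σ) = (α-1)⁻¹ log Tr[(σ^{(1-α)/(2α)} ρ σ^{(1-α)/(2α)})^α]` for `α ≠ 1`
(with `+∞` when `supp ρ ⊄ supp σ`), and `D_1 = D` the relative entropy. -/
noncomputable def sandRenyi {d n : ℕ} [Fact (Nat.Prime d)] (α : ℝ) (ρ σ : Mat d n) :
    EReal :=
  if α = 1 then relEnt ρ σ
  else if suppLE ρ σ then
    let x : ℝ := (α - 1)⁻¹ * Real.log
      ((matRpow (matRpow σ ((1 - α) / (2 * α)) * ρ * matRpow σ ((1 - α) / (2 * α)))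
        α).trace.re)
    (x : EReal)
  else ⊤

/-- The key unitary `U|i,j⟩ = |N g₁₁ i - N g₁₀ j, -N g₀₁ i + N g₀₀ j⟩`,
where `N = (det G)⁻¹` in `ℤ_d`. -/
noncomputable def convU (d n : ℕ) [Fact (Nat.Prime d)] (g00 g01 g10 g11 : ZMod d) :
    Matrix (QV d n × QV d n) (QV d n × QV d n) ℂ :=
  Matrix.of fun kl ij =>
    if kl = ((fun a => (g00 * g11 - g01 * g10)⁻¹ * g11 * ij.1 a
                      - (g00 * g11 - g01 * g10)⁻¹ * g10 * ij.2 a : QV d n),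
             (fun a => -((g00 * g11 - g01 * g10)⁻¹ * g01) * ij.1 a
                      + (g00 * g11 - g01 * g10)⁻¹ * g00 * ij.2 a : QV d n))
    then 1 else 0

/-- Tensor (Kronecker) product of two `n`-qudit operators, on the doubled system. -/
def kron {d n : ℕ} (ρ σ : Mat d n) : Matrix (QV d n × QV d n) (QV d n × QV d n) ℂ :=
  Matrix.of fun ij kl => ρ ij.1 kl.1 * σ ij.2 kl.2

/-- Partial trace over the second `n`-qudit factor. -/
noncomputable def ptrB {d n : ℕ} [Fact (Nat.Prime d)]
    (M : Matrix (QV d n × QV d n) (QV d n × QV d n) ℂ) : Mat d n :=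
  Matrix.of fun i i' => ∑ j : QV d n, M (i, j) (i', j)

/-- The convolution `ρ ⊠ σ = Tr_B[U (ρ ⊗ σ) U†]` with parameter matrix
`G = [g₀₀, g₀₁; g₁₀, g₁₁]`. -/
noncomputable def conv (d n : ℕ) [Fact (Nat.Prime d)] (g00 g01 g10 g11 : ZMod d)
    (ρ σ : Mat d n) : Mat d n :=
  ptrB (convU d n g00 g01 g10 g11 * kron ρ σ * (convU d n g00 g01 g10 g11)ᴴ)

/-- The beam-splitter unitary `U_{s,t}|i,j⟩ = |s i + t j, t i - s j⟩`. -/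
noncomputable def bsU (d n : ℕ) [Fact (Nat.Prime d)] (s t : ZMod d) :
    Matrix (QV d n × QV d n) (QV d n × QV d n) ℂ :=
  Matrix.of fun kl ij =>
    if kl = ((fun a => s * ij.1 a + t * ij.2 a : QV d n),
             (fun a => t * ij.1 a - s * ij.2 a : QV d n))
    then 1 else 0

/-- The beam-splitter convolution `ρ ⊠_{s,t} σ = Tr_B[U_{s,t} (ρ ⊗ σ) U_{s,t}†]`. -/
noncomputable def bsConv (d n : ℕ) [Fact (Nat.Prime d)] (s t : ZMod d)
    (ρ σ : Mat d n) : Mat d n :=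
  ptrB (bsU d n s t * kron ρ σ * (bsU d n s t)ᴴ)

/-- Iterated self-convolution: `⊠^0 ρ = ρ` and `⊠^{N+1} ρ = (⊠^N ρ) ⊠ ρ`. -/
noncomputable def bsIter (d n : ℕ) [Fact (Nat.Prime d)] (s t : ZMod d) :
    ℕ → Mat d n → Mat d n
  | 0, ρ => ρ
  | N + 1, ρ => bsConv d n s t (bsIter d n s t N ρ) ρ

/-- `ρ` is the pure stabilizer state `|ψ⟩⟨ψ|` with stabilizer label group `S ⊆ V^n`:
`S` has order `d^n` and `ψ` is a common eigenvector of all `w(p,q)`, `(p,q) ∈ S`. -/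
noncomputable def IsPureStabilizerWithGroup (d n : ℕ) [Fact (Nat.Prime d)]
    (ρ : Mat d n) (S : AddSubgroup (QV d n × QV d n)) : Prop :=
  Nat.card S = d ^ n ∧
    ∃ ψ : QV d n → ℂ, ψ ≠ 0 ∧
      ρ = Matrix.of (fun a b => ψ a * starRingEnd ℂ (ψ b)) ∧
      ∀ pq ∈ S, ∃ c : ℂ, (weyl d n pq.1 pq.2).mulVec ψ = c • ψ

/-- `ρ` is a pure stabilizer state. -/
noncomputable def IsPureStabilizer (d n : ℕ) [Fact (Nat.Prime d)] (ρ : Mat d n) : Prop :=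
  ∃ S : AddSubgroup (QV d n × QV d n), IsPureStabilizerWithGroup d n ρ S

/-- `ρ` is a stabilizer state: a convex combination of pure stabilizer states. -/
noncomputable def IsStabilizerState (d n : ℕ) [Fact (Nat.Prime d)] (ρ : Mat d n) : Prop :=
  ∃ (m : ℕ) (p : Fin m → ℝ) (τ : Fin m → Mat d n),
    (∀ i, 0 ≤ p i) ∧ ∑ i, p i = 1 ∧ (∀ i, IsPureStabilizer d n (τ i)) ∧
    ρ = ∑ i, (p i : ℂ) • τ i

/-- `U` is a Clifford unitary: a unitary mapping each Weyl operator, under conjugation,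
to a complex phase times a Weyl operator. -/
noncomputable def IsClifford (d n : ℕ) [Fact (Nat.Prime d)] (U : Mat d n) : Prop :=
  U ∈ Matrix.unitaryGroup (QV d n) ℂ ∧
    ∀ pq : QV d n × QV d n, ∃ (c : ℂ) (pq' : QV d n × QV d n),
      ‖c‖ = 1 ∧ U * weyl d n pq.1 pq.2 * Uᴴ = c • weyl d n pq'.1 pq'.2

/-- The divergence-based quantum Fisher information `J(ρ; H) = Tr[ρ [H,[H, log ρ]]]`. -/
noncomputable def fisherJ {d n : ℕ} [Fact (Nat.Prime d)] (ρ H : Mat d n) : ℝ :=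
  (ρ * (H * (H * matLog ρ - matLog ρ * H) - (H * matLog ρ - matLog ρ * H) * H)).trace.re

/-- Embed a single-qudit operator at site `k` of an `n`-qudit system
(tensored with the identity elsewhere). -/
noncomputable def embedAt (d n : ℕ) (k : Fin n) (M : Matrix (ZMod d) (ZMod d) ℂ) :
    Mat d n :=
  Matrix.of fun v w => if ∀ i, i ≠ k → v i = w i then M (v k) (w k) else 0

/-- The rank-one projection `H_j^Z = |j⟩⟨j|` onto the eigenvector of `Z`
with eigenvalue `ξ^j`. -/
noncomputable def projZ (d : ℕ) (j : ZMod d) : Matrix (ZMod d) (ZMod d) ℂ :=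
  Matrix.of fun a b => if a = j ∧ b = j then 1 else 0

/-- The rank-one projection `H_j^X` onto the eigenvector of `X` with eigenvalue `ξ^j`;
its entries are `(H_j^X)_{a b} = d⁻¹ ξ^{j(b-a)}`. -/
noncomputable def projX (d : ℕ) (j : ZMod d) : Matrix (ZMod d) (ZMod d) ℂ :=
  Matrix.of fun a b => (d : ℂ)⁻¹ * ch d (j * (b - a))

/-- Total Fisher information
`J(ρ) = ∑_{k=1}^n ∑_{j ∈ ℤ_d} J(ρ; H_j^{X_k}) + J(ρ; H_j^{Z_k})`. -/
noncomputable def fisherTotal (d n : ℕ) [Fact (Nat.Prime d)] (ρ : Mat d n) : ℝ :=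
  ∑ k : Fin n, ∑ j : ZMod d,
    (fisherJ ρ (embedAt d n k (projX d j)) + fisherJ ρ (embedAt d n k (projZ d j)))

/-- Holevo capacity of a channel `E`:
`χ(E) = sup H(∑ p_i E(ρ_i)) - ∑ p_i H(E(ρ_i))` over finite ensembles of states. -/
noncomputable def holevoCap (d n : ℕ) [Fact (Nat.Prime d)] (E : Mat d n → Mat d n) : ℝ :=
  ⨆ m : ℕ, ⨆ p : Fin m → ℝ, ⨆ ρs : Fin m → Mat d n,
    ⨆ _ : (∀ i, 0 ≤ p i) ∧ ∑ i, p i = 1 ∧ ∀ i, IsState d n (ρs i),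
      (vnEnt (∑ i, (p i : ℂ) • E (ρs i)) - ∑ i, p i * vnEnt (E (ρs i)))

/-- Hilbert–Schmidt norm `‖A‖₂ = (Tr[A†A])^{1/2}`. -/
noncomputable def hsNorm {d n : ℕ} [Fact (Nat.Prime d)] (A : Mat d n) : ℝ :=
  Real.sqrt ((Aᴴ * A).trace.re)

/-- Trace norm `‖A‖₁ = Tr[(A†A)^{1/2}]`. -/
noncomputable def trNorm {d n : ℕ} [Fact (Nat.Prime d)] (A : Mat d n) : ℝ :=
  (matRpow (Aᴴ * A) (2⁻¹ : ℝ)).trace.re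

/-- Tensor product of an `n₁`-qudit operator with an `n₂`-qudit operator,
as an `(n₁+n₂)`-qudit operator. -/
def tensorMat (d n₁ n₂ : ℕ) (ρ₁ : Mat d n₁) (ρ₂ : Mat d n₂) : Mat d (n₁ + n₂) :=
  Matrix.of fun v w =>
    ρ₁ (fun i => v (Fin.castAdd n₂ i)) (fun i => w (Fin.castAdd n₂ i)) *
    ρ₂ (fun j => v (Fin.natAdd n₁ j)) (fun j => w (Fin.natAdd n₁ j))

/-! ### Qubit (`d = 2`) specific definitions -/

/-- The `n`-qubit Weyl (Pauli) operator `w(p,q) = ⊗_i i^{-p_i q_i} Z^{p_i} X^{q_i}`. -/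
noncomputable def weyl2 (n : ℕ) (p q : Fin n → ZMod 2) :
    Matrix (Fin n → ZMod 2) (Fin n → ZMod 2) ℂ :=
  Matrix.of fun k' k =>
    if k' = k + q then
      ∏ i, ((-Complex.I) ^ ((p i).val * (q i).val) *
        (-1 : ℂ) ^ ((p i * (k i + q i)).val))
    else 0

/-- The `n`-qubit characteristic function `Ξ_ρ(p,q) = Tr[ρ w(p,q)†]`. -/
noncomputable def xi2 (n : ℕ) (ρ : Matrix (Fin n → ZMod 2) (Fin n → ZMod 2) ℂ)
    (pq : (Fin n → ZMod 2) × (Fin n → ZMod 2)) : ℂ :=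
  (ρ * (weyl2 n pq.1 pq.2)ᴴ).trace

/-- The logarithmic magic gap
`LMG(ρ) = -log₂ max{|Ξ_ρ(p,q)| : Ξ_ρ(p,q) ≠ 0, |Ξ_ρ(p,q)| ≠ 1}` (`0` if the set is
empty). -/
noncomputable def lmg (n : ℕ) (ρ : Matrix (Fin n → ZMod 2) (Fin n → ZMod 2) ℂ) : ℝ :=
  let s : Finset ℝ :=
    (Finset.univ.filter fun pq : (Fin n → ZMod 2) × (Fin n → ZMod 2) =>
      xi2 n ρ pq ≠ 0 ∧ ‖xi2 n ρ pq‖ ≠ 1).image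
      fun pq => ‖xi2 n ρ pq‖
  if h : s.Nonempty then -Real.logb 2 (s.max' h) else 0

/-- `U` is an `n`-qubit Clifford unitary. -/
noncomputable def IsClifford2 (n : ℕ) (U : Matrix (Fin n → ZMod 2) (Fin n → ZMod 2) ℂ) :
    Prop :=
  U ∈ Matrix.unitaryGroup (Fin n → ZMod 2) ℂ ∧
    ∀ pq : (Fin n → ZMod 2) × (Fin n → ZMod 2),
      ∃ (c : ℂ) (pq' : (Fin n → ZMod 2) × (Fin n → ZMod 2)),
        ‖c‖ = 1 ∧ U * weyl2 n pq.1 pq.2 * Uᴴ = c • weyl2 n pq'.1 pq'.2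

/-- The T gate `diag(1, e^{iπ/4})` acting on qubit `k` of an `n`-qubit system. -/
noncomputable def tGateAt (n : ℕ) (k : Fin n) :
    Matrix (Fin n → ZMod 2) (Fin n → ZMod 2) ℂ :=
  embedAt 2 n k (Matrix.of fun a b =>
    if a = b then (if a = 0 then 1 else Complex.exp (Real.pi * Complex.I / 4)) else 0)

/-- An `n`-qubit state: positive semidefinite with trace one. -/
def IsState2 (n : ℕ) (ρ : Matrix (Fin n → ZMod 2) (Fin n → ZMod 2) ℂ) : Prop :=
  ρ.PosSemidef ∧ ρ.trace = 1

end PaperQI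

namespace PaperQI

section helpers

open scoped MatrixOrder in
/-- A positive semidefinite square root factorisation. -/
theorem exists_factor {m : Type*} [Fintype m] {A : Matrix m m ℂ} (hA : A.PosSemidef) :
    ∃ B : Matrix m m ℂ, A = Bᴴ * B :=
  CStarAlgebra.nonneg_iff_eq_star_mul_self.mp hA.nonneg

/-- If `|Tr(ρ W)| = 1` for a unitary `W`, then `ρ W = Tr(ρ W) ρ`. -/
theorem mul_eq_smul_of_norm_trace {m : Type*} [Fintype m] [DecidableEq m]
    {ρ W : Matrix m m ℂ} (hρ : ρ.PosSemidef) (htr : ρ.trace = 1) (hW : W * Wᴴ = 1)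
    (h : ‖(ρ * W).trace‖ = 1) : ρ * W = (ρ * W).trace • ρ := by
  set z := (ρ * W).trace with hz
  have hzz : z * star z = 1 := by
    have := Complex.mul_conj z
    rw [Complex.normSq_eq_norm_sq, h] at this
    simpa using this
  have hst : (ρ * Wᴴ).trace = star z := by
    rw [hz, ← trace_conjTranspose, conjTranspose_mul, hρ.1.eq, trace_mul_comm]
  obtain ⟨B, hB⟩ := exists_factor hρ
  have h0 : (B * (W - z • (1 : Matrix m m ℂ))) * (B * (W - z • (1 : Matrix m m ℂ)))ᴴ
      = B * ((2 : ℂ) • (1 : Matrix m m ℂ) - star z • W - z • Wᴴ) * Bᴴ := by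
    rw [conjTranspose_mul, mul_assoc, ← mul_assoc (W - _), ← mul_assoc B, ]
    congr 2
    simp only [conjTranspose_sub, conjTranspose_smul, conjTranspose_one, sub_mul, mul_sub, hW,
      smul_mul_assoc, mul_smul_comm, one_mul, mul_one]
    match_scalars <;> first | linear_combination hzz | ring1
  have h1 : ((B * (W - z • (1 : Matrix m m ℂ))) *
      (B * (W - z • (1 : Matrix m m ℂ)))ᴴ).trace = 0 := by
    rw [h0, trace_mul_comm, ← mul_assoc, ← hB]
    simp only [mul_sub, mul_smul_comm, mul_one, trace_sub, trace_smul, ← hz, hst, htr, smul_eq_mul,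
      hzz, mul_comm (star z) z]
    norm_num
  rw [trace_mul_conjTranspose_self_eq_zero_iff] at h1
  have h2 : ρ * (W - z • (1 : Matrix m m ℂ)) = 0 := by
    rw [hB, mul_assoc, h1, mul_zero]
  rw [mul_sub, sub_eq_zero] at h2
  simpa using h2

/-- If `ρ W = z ρ` with `W` unitary, then `|z| = 1`. -/
theorem norm_of_mul_eq_smul {m : Type*} [Fintype m] [DecidableEq m]
    {ρ W : Matrix m m ℂ} (hρ : ρ.IsHermitian) (htr : ρ.trace = 1) (hW : W * Wᴴ = 1)
    {z : ℂ} (h : ρ * W = z • ρ) : ‖z‖ = 1 := by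
  have h1 : (Wᴴ * (ρ * W)).trace = 1 := by
    rw [trace_mul_comm, mul_assoc, hW, mul_one, htr]
  have h2 : Wᴴ * ρ = star z • ρ := by
    have := congrArg conjTranspose h
    rwa [conjTranspose_mul, hρ.eq, conjTranspose_smul, hρ.eq] at this
  rw [h, mul_smul_comm, h2, smul_smul, trace_smul, htr, smul_eq_mul, mul_one] at h1
  have h3 := Complex.mul_conj z
  rw [show (starRingEnd ℂ) z = star z from rfl, h1, Complex.normSq_eq_norm_sq] at h3
  have h4 : ‖z‖ ^ 2 = 1 := by exact_mod_cast h3.symm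
  nlinarith [norm_nonneg z]

variable {d n : ℕ} [Fact (Nat.Prime d)]

theorem spectral {ρ : Mat d n} (h : ρ.IsHermitian) :
    ρ = (h.eigenvectorUnitary : Mat d n) *
      Matrix.diagonal (fun i => (h.eigenvalues i : ℂ)) *
      star (h.eigenvectorUnitary : Mat d n) := h.spectral_theorem

/-- Eigenvalues of a multiple of a projection. -/
theorem eig_proj {Q : Mat d n} {c : ℝ} (hQ2 : Q * Q = Q)
    (h : ((c : ℂ) • Q).IsHermitian) (i : QV d n) :
    h.eigenvalues i = 0 ∨ h.eigenvalues i = c := by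
  have hs := spectral h
  set U : Mat d n := (h.eigenvectorUnitary : Mat d n) with hU
  have hUU : star U * U = 1 := Unitary.coe_star_mul_self h.eigenvectorUnitary
  set D : Mat d n := Matrix.diagonal (fun i => (h.eigenvalues i : ℂ)) with hD
  have h1 : ((c : ℂ) • Q) * ((c : ℂ) • Q) = (c : ℂ) • ((c : ℂ) • Q) := by
    rw [smul_mul_smul_comm, hQ2, smul_smul]
  rw [hs] at h1
  have h2 : D * D = (c : ℂ) • D := by
    have h3 := congrArg (fun X => star U * X * U) h1
    simp only [mul_smul_comm, smul_mul_assoc] at h3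
    have e1 : star U * (U * D * star U * (U * D * star U)) * U
        = (star U * U) * D * (star U * U) * D * (star U * U) := by simp only [mul_assoc]
    have e2 : star U * (U * D * star U) * U
        = (star U * U) * D * (star U * U) := by simp only [mul_assoc]
    rw [e1, e2, hUU] at h3
    simpa using h3
  have h4 := congrFun (congrFun h2 i) i
  rw [hD, diagonal_mul_diagonal, Matrix.smul_apply, diagonal_apply_eq, diagonal_apply_eq,
    smul_eq_mul] at h4
  have h5 : h.eigenvalues i * h.eigenvalues i = c * h.eigenvalues i := by exact_mod_cast h4
  by_cases h6 : h.eigenvalues i = 0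
  · exact Or.inl h6
  · exact Or.inr (mul_right_cancel₀ h6 h5)

theorem herm_smul {Q : Mat d n} (c : ℝ) (hQ : Qᴴ = Q) : ((c : ℂ) • Q).IsHermitian := by
  unfold Matrix.IsHermitian
  rw [conjTranspose_smul, hQ]
  simp

theorem matLog_proj {Q : Mat d n} {c : ℝ} (hc : 0 < c) (hQ : Qᴴ = Q) (hQ2 : Q * Q = Q) :
    matLog ((c : ℂ) • Q) = (Real.log c : ℂ) • Q := by
  have h := herm_smul c hQ
  have hs := spectral h
  unfold matLog
  rw [dif_pos h]
  have h1 : (Matrix.diagonal (fun i => (Real.log (h.eigenvalues i) : ℂ)) : Mat d n)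
      = ((Real.log c / c : ℝ) : ℂ) • Matrix.diagonal (fun i => (h.eigenvalues i : ℂ)) := by
    rw [← diagonal_smul]
    congr 1
    funext i
    rw [Pi.smul_apply, smul_eq_mul, ← Complex.ofReal_mul]
    congr 1
    rcases eig_proj hQ2 h i with h0 | h0 <;> rw [h0]
    · simp
    · field_simp
  rw [h1, mul_smul_comm, smul_mul_assoc, ← hs, smul_smul, ← Complex.ofReal_mul]
  congr 2
  field_simp

theorem vnEnt_proj {Q : Mat d n} {c : ℝ} (hQ : Qᴴ = Q) (hQ2 : Q * Q = Q)
    (htr : ((c : ℂ) • Q).trace = 1) : vnEnt ((c : ℂ) • Q) = - Real.log c := by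
  have h := herm_smul c hQ
  unfold vnEnt
  rw [dif_pos h]
  have h1 : ∀ i, h.eigenvalues i * Real.log (h.eigenvalues i)
      = Real.log c * h.eigenvalues i := by
    intro i
    rcases eig_proj hQ2 h i with h0 | h0 <;> rw [h0]
    · simp
    · ring
  rw [Finset.sum_congr rfl (fun i _ => h1 i), ← Finset.mul_sum]
  have h2 := h.trace_eq_sum_eigenvalues
  rw [htr] at h2
  have h3 : ∑ i, h.eigenvalues i = 1 := by
    apply Complex.ofReal_injective
    rw [Complex.ofReal_sum, Complex.ofReal_one]
    exact h2.symm
  rw [h3, mul_one]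

theorem trace_mul_matLog {ρ : Mat d n} (h : ρ.IsHermitian) :
    (ρ * matLog ρ).trace.re = - vnEnt ρ := by
  unfold matLog vnEnt
  rw [dif_pos h, dif_pos h, neg_neg]
  have hs := spectral h
  set U : Mat d n := (h.eigenvectorUnitary : Mat d n) with hU
  have hUU : star U * U = 1 := Unitary.coe_star_mul_self h.eigenvectorUnitary
  set D : Mat d n := Matrix.diagonal (fun i => (h.eigenvalues i : ℂ)) with hD
  set L : Mat d n := Matrix.diagonal (fun i => (Real.log (h.eigenvalues i) : ℂ)) with hL
  have e : ρ * (U * L * star U) = U * (D * L * star U) := by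
    conv_lhs => rw [hs]
    calc U * D * star U * (U * L * star U) = U * D * (star U * U) * L * star U := by
          simp only [mul_assoc]
      _ = _ := by rw [hUU]; simp only [mul_assoc, mul_one, one_mul]
  rw [e, trace_mul_comm, mul_assoc, hUU, mul_one, hD, hL, diagonal_mul_diagonal, trace_diagonal,
    Complex.re_sum]
  refine Finset.sum_congr rfl fun i _ => ?_
  rw [← Complex.ofReal_mul, Complex.ofReal_re]

/-- Relative entropy with respect to a normalised projection. -/
theorem relEnt_proj {ρ Q : Mat d n} {c : ℝ} (hρ : IsState d n ρ) (hc : 0 < c) (hQ : Qᴴ = Q)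
    (hQ2 : Q * Q = Q) (hρQ : ρ * Q = ρ) :
    relEnt ρ ((c : ℂ) • Q) = ((- Real.log c - vnEnt ρ : ℝ) : EReal) := by
  unfold relEnt
  rw [if_pos]
  · congr 1
    rw [matLog_proj hc hQ hQ2, mul_sub, trace_sub, Complex.sub_re, trace_mul_matLog hρ.1.1,
      mul_smul_comm, hρQ, trace_smul, hρ.2]
    simp
    ring
  · intro v hv
    rw [smul_mulVec] at hv
    have hv' : Q *ᵥ v = 0 := by
      rcases smul_eq_zero.mp hv with h | h
      · exact absurd (by exact_mod_cast h) hc.ne'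
      · exact h
    rw [← hρQ, ← mulVec_mulVec, hv', mulVec_zero]

theorem mul_proj_of_suppLE {ρ Q : Mat d n} {c : ℂ} (hQ2 : Q * Q = Q)
    (h : suppLE ρ (c • Q)) : ρ * Q = ρ := by
  have h1 : ρ * (1 - Q) = 0 := by
    apply Matrix.ext_of_mulVec_single
    intro i
    rw [← mulVec_mulVec, zero_mulVec]
    apply h
    rw [mulVec_mulVec, smul_mul_assoc, mul_sub, hQ2, mul_one, sub_self, smul_zero, zero_mulVec]
  rw [mul_sub, mul_one, sub_eq_zero] at h1
  exact h1.symm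

/-! ### Weyl operators -/

theorem ch_eq (z : ZMod d) : ch d z = ZMod.stdAddChar z := by
  rw [ZMod.stdAddChar_apply, ZMod.toCircle_apply, ch]

theorem ch_add (a b : ZMod d) : ch d (a + b) = ch d a * ch d b := by
  simp only [ch_eq, AddChar.map_add_eq_mul]

theorem ch_zero : ch d 0 = 1 := by
  simp only [ch_eq, AddChar.map_zero_eq_one]

theorem ch_star (a : ZMod d) : star (ch d a) = ch d (-a) := by
  rw [ch_eq, ch_eq, ZMod.stdAddChar_apply, ZMod.stdAddChar_apply, AddChar.map_neg_eq_inv,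
    Circle.coe_inv_eq_conj]
  rfl

theorem ch_ne_one {a : ZMod d} (h : a ≠ 0) : ch d a ≠ 1 := by
  rw [← ch_zero (d := d), ch_eq, ch_eq]
  exact fun h' => h (ZMod.injective_stdAddChar h')

/-- The Weyl operator with a pair label. -/
noncomputable def W (a : QV d n × QV d n) : Mat d n := weyl d n a.1 a.2

theorem qdot_add_right (p k l : QV d n) : qdot p (k + l) = qdot p k + qdot p l := by
  simp [qdot, mul_add, Finset.sum_add_distrib]

theorem qdot_add_left (p k l : QV d n) : qdot (p + k) l = qdot p l + qdot k l := by
  simp [qdot, add_mul, Finset.sum_add_distrib]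

theorem qdot_neg_right (p k : QV d n) : qdot p (-k) = - qdot p k := by
  simp [qdot]

theorem qdot_neg_left (p k : QV d n) : qdot (-p) k = - qdot p k := by
  simp [qdot]

theorem two_inv (hd : Odd d) : (2 : ZMod d)⁻¹ + (2 : ZMod d)⁻¹ = 1 := by
  have h2 : (2 : ZMod d) ≠ 0 := by
    intro h
    have h3 : ((2 : ℕ) : ZMod d) = 0 := by exact_mod_cast h
    rw [ZMod.natCast_eq_zero_iff] at h3
    have hp : d.Prime := Fact.out
    have := (Nat.prime_dvd_prime_iff_eq hp Nat.prime_two).mp h3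
    subst this
    exact absurd hd (by decide)
  rw [← two_mul, mul_inv_cancel₀ h2]

theorem W_zero : (W 0 : Mat d n) = 1 := by
  ext i j
  simp [W, weyl, qdot, ch_zero, one_apply]

theorem W_mul (hd : Odd d) (a b : QV d n × QV d n) :
    W a * W b = ch d ((2 : ZMod d)⁻¹ * (qdot a.1 b.2 - qdot b.1 a.2)) • W (a + b) := by
  ext i j
  simp only [W, weyl, mul_apply, of_apply, Matrix.smul_apply, smul_eq_mul, Prod.fst_add, Prod.snd_add]
  rw [Finset.sum_eq_single (j + b.2)]
  · rw [if_pos (rfl : j + b.2 = j + b.2)]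
    by_cases h : i = j + b.2 + a.2
    · rw [if_pos h, if_pos (by rw [h]; abel), ← ch_add, ← ch_add]
      congr 1
      simp only [qdot_add_left, qdot_add_right]
      linear_combination (-qdot a.1 b.2) * two_inv hd
    · rw [if_neg h, if_neg (fun h' => h (by rw [h']; abel))]
      simp
  · intro k _ hk
    rw [if_neg hk, mul_zero]
  · simp

theorem W_conj (hd : Odd d) (a : QV d n × QV d n) : (W a : Mat d n)ᴴ = W (-a) := by
  ext i j
  simp only [W, weyl, conjTranspose_apply, of_apply, Prod.fst_neg, Prod.snd_neg]
  by_cases h : j = i + a.2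
  · rw [if_pos h, if_pos (by rw [h]; abel), ch_star]
    congr 1
    rw [h]
    simp only [qdot_add_right, qdot_neg_left, qdot_neg_right]
    linear_combination (-qdot a.1 a.2) * two_inv hd
  · rw [if_neg h, if_neg (fun h' => h (by rw [h']; abel)), star_zero]

theorem W_mul_neg (hd : Odd d) (a : QV d n × QV d n) : (W a : Mat d n) * W (-a) = 1 := by
  rw [W_mul hd, add_neg_cancel, W_zero]
  simp [qdot_neg_left, qdot_neg_right, ch_zero]

theorem W_mul_conj (hd : Odd d) (a : QV d n × QV d n) : (W a : Mat d n) * (W a)ᴴ = 1 := by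
  rw [W_conj hd, W_mul_neg hd]

theorem W_trace {a : QV d n × QV d n} (ha : a ≠ 0) : (W a : Mat d n).trace = 0 := by
  obtain ⟨p, q⟩ := a
  simp only [Matrix.trace, diag_apply, W, weyl, of_apply]
  by_cases hq : q = 0
  · subst hq
    have hp : p ≠ 0 := fun h => ha (by rw [h]; rfl)
    obtain ⟨i, hi⟩ := Function.ne_iff.mp hp
    have hk : qdot p (Pi.single i 1) ≠ 0 := by
      simpa [qdot, Pi.single_apply] using hi
    have e : ∀ k : QV d n, (if k = k + 0 then ch d (qdot p k + (2 : ZMod d)⁻¹ * qdot p 0) else 0)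
        = ch d (qdot p k) := by
      intro k
      simp [qdot]
    simp only [e]
    have h1 : ∑ k : QV d n, ch d (qdot p k)
        = ch d (qdot p (Pi.single i 1)) * ∑ k : QV d n, ch d (qdot p k) := by
      rw [Finset.mul_sum, ← Equiv.sum_comp (Equiv.addLeft (Pi.single i (1 : ZMod d) : QV d n))]
      refine Finset.sum_congr rfl fun k _ => ?_
      rw [Equiv.coe_addLeft, qdot_add_right, ch_add]
    have h2 : (ch d (qdot p (Pi.single i 1)) - 1) * ∑ k : QV d n, ch d (qdot p k) = 0 := by
      linear_combination -h1
    exact (mul_eq_zero.mp h2).resolve_left (sub_ne_zero.mpr (ch_ne_one hk))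
  · apply Finset.sum_eq_zero
    intro k _
    rw [if_neg]
    intro h
    exact hq (by simpa using h)

/-! ### The stabilizer group of a state -/

theorem state_ne_zero {ρ : Mat d n} (hρ : IsState d n ρ) : ρ ≠ 0 := by
  intro h
  have := hρ.2
  rw [h] at this
  simp at this

/-- The group of labels of Weyl operators stabilizing `ρ` up to a phase. -/
noncomputable def stab (hd : Odd d) (ρ : Mat d n) (hρ : IsState d n ρ) :
    AddSubgroup (QV d n × QV d n) where
  carrier := {a | ∃ z : ℂ, ρ * W a = z • ρ}
  zero_mem' := ⟨1, by rw [W_zero, mul_one, one_smul]⟩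
  add_mem' := by
    rintro a b ⟨y, hy⟩ ⟨z, hz⟩
    set c := ch d ((2 : ZMod d)⁻¹ * (qdot a.1 b.2 - qdot b.1 a.2)) with hc
    have hc0 : c ≠ 0 := Complex.exp_ne_zero _
    refine ⟨c⁻¹ * (y * z), ?_⟩
    have h1 : W (a + b) = c⁻¹ • (W a * W b) := by
      rw [W_mul hd, smul_smul, inv_mul_cancel₀ hc0, one_smul]
    rw [h1, mul_smul_comm, ← mul_assoc, hy, smul_mul_assoc, hz, smul_smul, smul_smul, mul_assoc]
  neg_mem' := by
    rintro a ⟨z, hz⟩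
    have h1 : ρ = z • (ρ * W (-a)) := by
      rw [← smul_mul_assoc, ← hz, mul_assoc, W_mul_neg hd, mul_one]
    have hz0 : z ≠ 0 := by
      rintro rfl
      rw [zero_smul] at h1
      exact state_ne_zero hρ h1
    refine ⟨z⁻¹, ?_⟩
    conv_rhs => rw [h1]
    rw [smul_smul, inv_mul_cancel₀ hz0, one_smul]

theorem xi_eq (ρ : Mat d n) (a : QV d n × QV d n) : xi d n ρ a = (ρ * W (-a)).trace := rfl

theorem mem_stab_iff (hd : Odd d) {ρ : Mat d n} (hρ : IsState d n ρ) (a : QV d n × QV d n) :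
    a ∈ stab hd ρ hρ ↔ ‖xi d n ρ a‖ = 1 := by
  rw [← neg_mem_iff, xi_eq]
  constructor
  · rintro ⟨z, hz⟩
    rw [hz, trace_smul, hρ.2, smul_eq_mul, mul_one]
    exact norm_of_mul_eq_smul hρ.1.1 hρ.2 (W_mul_conj hd _) hz
  · intro h
    exact ⟨_, mul_eq_smul_of_norm_trace hρ.1 hρ.2 (W_mul_conj hd _) h⟩

/-- The stabilizing operators of `ρ`. -/
noncomputable def T (ρ : Mat d n) (a : QV d n × QV d n) : Mat d n := xi d n ρ a • W a

theorem mul_T (hd : Odd d) {ρ : Mat d n} (hρ : IsState d n ρ) {a : QV d n × QV d n}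
    (ha : a ∈ stab hd ρ hρ) : ρ * T ρ a = ρ := by
  obtain ⟨y, hy⟩ := (stab hd ρ hρ).neg_mem ha
  have hx : xi d n ρ a = y := by
    rw [xi_eq, hy, trace_smul, hρ.2, smul_eq_mul, mul_one]
  rw [T, hx, mul_smul_comm, ← smul_mul_assoc, ← hy, mul_assoc]
  have := W_mul_neg hd (-a)
  rw [neg_neg] at this
  rw [this, mul_one]

theorem T_mul (hd : Odd d) {ρ : Mat d n} (hρ : IsState d n ρ) {a b : QV d n × QV d n}
    (ha : a ∈ stab hd ρ hρ) (hb : b ∈ stab hd ρ hρ) : T ρ a * T ρ b = T ρ (a + b) := by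
  have hab := (stab hd ρ hρ).add_mem ha hb
  have hx : xi d n ρ (a + b) ≠ 0 := by
    intro h
    have := (mem_stab_iff hd hρ _).mp hab
    rw [h] at this
    simp at this
  obtain ⟨l, hl⟩ : ∃ l : ℂ, T ρ a * T ρ b = l • T ρ (a + b) := by
    refine ⟨xi d n ρ a * xi d n ρ b *
      ch d ((2 : ZMod d)⁻¹ * (qdot a.1 b.2 - qdot b.1 a.2)) * (xi d n ρ (a + b))⁻¹, ?_⟩
    simp only [T]
    rw [smul_mul_smul_comm, W_mul hd, smul_smul, smul_smul, inv_mul_cancel_right₀ hx]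
  have h1 : ρ = l • ρ := by
    have h2 := congrArg (fun X => ρ * X) hl
    simp only [mul_smul_comm] at h2
    rwa [mul_T hd hρ hab, ← mul_assoc, mul_T hd hρ ha, mul_T hd hρ hb] at h2
  have h3 : l = 1 := by
    have h4 := congrArg Matrix.trace h1
    rw [trace_smul, hρ.2, smul_eq_mul, mul_one] at h4
    exact h4.symm
  rw [hl, h3, one_smul]

theorem T_conj (hd : Odd d) {ρ : Mat d n} (hρ : IsState d n ρ) (a : QV d n × QV d n) :
    (T ρ a)ᴴ = T ρ (-a) := by
  rw [T, T, conjTranspose_smul, W_conj hd, xi_eq, xi_eq, ← trace_conjTranspose, conjTranspose_mul,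
    hρ.1.1.eq, W_conj hd, trace_mul_comm]

/-- The mean state is a normalised projection fixing `ρ`. -/
theorem meanState_eq (hd : Odd d) {ρ : Mat d n} (hρ : IsState d n ρ) :
    ∃ Q : Mat d n, Qᴴ = Q ∧ Q * Q = Q ∧ ρ * Q = ρ ∧
      meanState d n ρ = (((Nat.card (stab hd ρ hρ) : ℝ) / (d : ℝ) ^ n : ℝ) : ℂ) • Q ∧
      (meanState d n ρ).trace = 1 := by
  set S := stab hd ρ hρ with hS
  have hN : ((Nat.card S : ℕ) : ℂ) ≠ 0 := by exact_mod_cast Nat.card_pos.ne'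
  have hd0 : (d : ℂ) ≠ 0 := by exact_mod_cast (Fact.out : d.Prime).ne_zero
  set R : Mat d n := ∑ a : S, T ρ a with hR
  have hRR : R * R = (Nat.card S : ℂ) • R := by
    have h1 : ∀ a : S, T ρ a * R = R := by
      intro a
      rw [hR, Finset.mul_sum, ← Equiv.sum_comp (Equiv.addLeft a) (fun b : S => T ρ b)]
      refine Finset.sum_congr rfl fun b _ => ?_
      rw [T_mul hd hρ a.2 b.2]
      rfl
    conv_lhs => rw [hR, Finset.sum_mul]
    rw [← hR, Finset.sum_congr rfl (fun a _ => h1 a), Finset.sum_const, Finset.card_univ,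
      Nat.card_eq_fintype_card, Nat.cast_smul_eq_nsmul]
  have hRh : Rᴴ = R := by
    rw [hR, conjTranspose_sum, ← Equiv.sum_comp (Equiv.neg S) (fun b : S => T ρ b)]
    refine Finset.sum_congr rfl fun b _ => ?_
    rw [T_conj hd hρ]
    rfl
  have hρR : ρ * R = (Nat.card S : ℂ) • ρ := by
    rw [hR, Finset.mul_sum, Finset.sum_congr rfl (fun (a : S) _ => mul_T hd hρ a.2),
      Finset.sum_const, Finset.card_univ, Nat.card_eq_fintype_card, Nat.cast_smul_eq_nsmul]
  have hM : meanState d n ρ = ((d : ℂ) ^ n)⁻¹ • R := by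
    unfold meanState
    congr 1
    rw [← Finset.sum_filter, hR]
    symm
    refine (Finset.sum_subtype _ ?_ (fun a => T ρ a)).symm
    intro a
    rw [hS, mem_stab_iff hd hρ]
    simp
  refine ⟨(Nat.card S : ℂ)⁻¹ • R, ?_, ?_, ?_, ?_, ?_⟩
  · rw [conjTranspose_smul, hRh]
    simp
  · rw [smul_mul_smul_comm, hRR, smul_smul, mul_assoc, inv_mul_cancel₀ hN, mul_one]
  · rw [mul_smul_comm, hρR, smul_smul, inv_mul_cancel₀ hN, one_smul]
  · rw [hM, smul_smul]
    congr 1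
    push_cast
    field_simp
  · rw [hM, trace_smul, hR, trace_sum, Finset.sum_eq_single (0 : S)]
    · have : xi d n ρ 0 = 1 := by
        rw [xi_eq, neg_zero, W_zero, mul_one, hρ.2]
      rw [T, AddSubgroup.coe_zero, this, W_zero, one_smul, trace_one, smul_eq_mul]
      simp [ZMod.card, hd0]
    · intro a _ ha
      rw [T, trace_smul, W_trace, smul_zero]
      exact fun h => ha (Subtype.ext h)
    · simp

/-! ### Projections in MSPS -/

theorem W_pow (hd : Odd d) (a : QV d n × QV d n) (k : ℕ) :
    (W a : Mat d n) ^ k = W (k • a) := by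
  induction k with
  | zero => rw [pow_zero, zero_smul, W_zero]
  | succ k ih =>
    rw [pow_succ, ih, W_mul hd, succ_nsmul]
    have h : qdot (k • a).1 a.2 - qdot a.1 (k • a).2 = 0 := by
      simp [qdot, Finset.mul_sum, mul_left_comm, mul_assoc]
    rw [h, mul_zero, ch_zero, one_smul]

theorem genT_pow (hd : Odd d) (x : ZMod d) (a : QV d n × QV d n) :
    (ch d x • (W a : Mat d n)) ^ d = 1 := by
  have h1 : ch d x ^ d = 1 := by
    rw [ch_eq, ← AddChar.map_nsmul_eq_pow]
    simp
  have h2 : d • a = 0 := by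
    ext i <;> simp
  rw [smul_pow, h1, W_pow hd, h2, W_zero, one_smul]

theorem genT_conj (hd : Odd d) (x : ZMod d) (a : QV d n × QV d n) :
    (ch d x • (W a : Mat d n))ᴴ * (ch d x • (W a : Mat d n)) = 1 := by
  have h := W_mul_neg hd (-a)
  rw [neg_neg] at h
  rw [conjTranspose_smul, smul_mul_smul_comm, W_conj hd, h, ch_star, ← ch_add, neg_add_cancel,
    ch_zero, one_smul]

/-- Averaging projection of an operator of order `d`. -/
noncomputable def avg (X : Mat d n) : Mat d n := (d : ℂ)⁻¹ • ∑ k : ZMod d, X ^ k.val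

theorem avg_fix {X : Mat d n} (hX : X ^ d = 1) : X * avg X = avg X := by
  unfold avg
  rw [mul_smul_comm, Finset.mul_sum, ← Equiv.sum_comp (Equiv.addRight (1 : ZMod d))
    (fun k => X ^ k.val)]
  congr 1
  refine Finset.sum_congr rfl fun k _ => ?_
  haveI : Fact (1 < d) := ⟨(Fact.out : d.Prime).one_lt⟩
  rw [Equiv.coe_addRight, ZMod.val_add, ZMod.val_one, ← pow_succ']
  conv_lhs => rw [← Nat.mod_add_div (k.val + 1) d, pow_add, pow_mul, hX, one_pow, mul_one]

theorem pow_avg {X : Mat d n} (hX : X * avg X = avg X) (k : ℕ) : X ^ k * avg X = avg X := by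
  induction k with
  | zero => simp
  | succ k ih => rw [pow_succ, mul_assoc, hX, ih]

theorem avg_conj_mul {X Y : Mat d n} (hY : Y * avg X = avg X) :
    avg Y * avg X = avg X := by
  have hp : ∀ k : ℕ, Y ^ k * avg X = avg X := by
    intro k
    induction k with
    | zero => simp
    | succ k ih => rw [pow_succ, mul_assoc, hY, ih]
  have hd0 : (d : ℂ) ≠ 0 := by exact_mod_cast (Fact.out : d.Prime).ne_zero
  conv_lhs => rw [avg]
  rw [smul_mul_assoc, Finset.sum_mul, Finset.sum_congr rfl (fun k _ => hp _), Finset.sum_const,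
    Finset.card_univ, ZMod.card, ← Nat.cast_smul_eq_nsmul ℂ, smul_smul, inv_mul_cancel₀ hd0,
    one_smul]

theorem avg_conj (X : Mat d n) : (avg X)ᴴ = avg Xᴴ := by
  unfold avg
  rw [conjTranspose_smul, conjTranspose_sum]
  simp [conjTranspose_pow]

theorem avg_herm {X : Mat d n} (hX : X ^ d = 1) (hU : Xᴴ * X = 1) : (avg X)ᴴ = avg X := by
  have h1 : (avg X)ᴴ * avg X = avg X := by
    rw [avg_conj]
    apply avg_conj_mul
    conv_lhs => rw [← avg_fix hX, ← mul_assoc, hU, one_mul]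
  rw [← h1, conjTranspose_mul, conjTranspose_conjTranspose]

theorem avg_commute {X Y : Mat d n} (h : Commute X Y) : Commute (avg X) (avg Y) := by
  unfold avg
  apply Commute.smul_left
  apply Commute.smul_right
  apply Commute.sum_left
  intro i _
  apply Commute.sum_right
  intro j _
  exact h.pow_pow _ _

theorem list_prod_proj (l : List (Mat d n)) (hc : ∀ A ∈ l, ∀ B ∈ l, Commute A B)
    (hh : ∀ A ∈ l, Aᴴ = A) (hi : ∀ A ∈ l, A * A = A) :
    l.prodᴴ = l.prod ∧ l.prod * l.prod = l.prod ∧ ∀ A ∈ l, l.prod * A = l.prod := by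
  induction l with
  | nil => simp
  | cons A l ih =>
    obtain ⟨h1, h2, h3⟩ := ih (fun B hB C hC => hc B (by simp [hB]) C (by simp [hC]))
      (fun B hB => hh B (by simp [hB])) (fun B hB => hi B (by simp [hB]))
    have hA := hh A (by simp)
    have hAA := hi A (by simp)
    have hcomm : Commute A l.prod := by
      apply Commute.list_prod_right
      intro B hB
      exact hc A (by simp) B (by simp [hB])
    rw [List.prod_cons]
    refine ⟨?_, ?_, ?_⟩
    · rw [conjTranspose_mul, h1, hA, hcomm.eq]
    · rw [mul_assoc, ← mul_assoc l.prod, ← hcomm.eq, mul_assoc, h2, ← mul_assoc, hAA]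
    · intro B hB
      rcases List.mem_cons.mp hB with rfl | hB
      · rw [mul_assoc, ← hcomm.eq, ← mul_assoc, hAA]
      · rw [mul_assoc, h3 B hB]

end helpers


/-- For every `n`-qudit state `ρ`:
`D(ρ‖M(ρ)) = H(M(ρ)) - H(ρ)`, and for every MSPS `σ`, `D(ρ‖M(ρ)) ≤ D(ρ‖σ)`;
the mean state is a closest MSPS in relative entropy. -/
theorem statement1 (d n : ℕ) [Fact (Nat.Prime d)] (hd : Odd d) (hn : 1 ≤ n)
    (ρ : Mat d n) (hρ : IsState d n ρ) :
    relEnt ρ (meanState d n ρ) =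
      ((vnEnt (meanState d n ρ) - vnEnt ρ : ℝ) : EReal) ∧
    ∀ σ : Mat d n, IsMSPS d n σ → relEnt ρ (meanState d n ρ) ≤ relEnt ρ σ := by
  obtain ⟨Q, hQ, hQ2, hρQ, hM, htr⟩ := meanState_eq hd hρ
  set N := Nat.card (stab hd ρ hρ) with hN
  have hd0 : (0 : ℝ) < d := by exact_mod_cast (Fact.out : d.Prime).pos
  have hNpos : (0 : ℝ) < N := by exact_mod_cast (Nat.card_pos : 0 < Nat.card (stab hd ρ hρ))
  have hc : (0 : ℝ) < (N : ℝ) / (d : ℝ) ^ n := by positivity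
  have hrel : relEnt ρ (meanState d n ρ) =
      ((- Real.log ((N : ℝ) / (d : ℝ) ^ n) - vnEnt ρ : ℝ) : EReal) := by
    rw [hM, relEnt_proj hρ hc hQ hQ2 hρQ]
  refine ⟨?_, ?_⟩
  · rw [hrel]
    congr 2
    rw [hM] at htr ⊢
    rw [vnEnt_proj hQ hQ2 htr]
  · rintro σ ⟨r, hr, p, q, x, hcomm, hcard, hσ⟩
    by_cases hsupp : suppLE ρ σ
    swap
    · have : relEnt ρ σ = ⊤ := by
        unfold relEnt
        rw [if_neg hsupp]
      rw [this]
      exact le_top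
    set X : Fin r → Mat d n := fun i => ch d (x i) • W (p i, q i) with hX
    set l : List (Mat d n) := List.ofFn fun i => avg (X i) with hl
    have hXd : ∀ i, X i ^ d = 1 := fun i => genT_pow hd _ _
    have hXu : ∀ i, (X i)ᴴ * X i = 1 := fun i => genT_conj hd _ _
    have hXc : ∀ i j, Commute (X i) (X j) := fun i j =>
      ((hcomm i j).smul_left _).smul_right _
    obtain ⟨h1, h2, h3⟩ := list_prod_proj l
      (by
        intro A hA B hB
        obtain ⟨i, rfl⟩ := (List.mem_ofFn' _ _).mp hA
        obtain ⟨j, rfl⟩ := (List.mem_ofFn' _ _).mp hB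
        exact avg_commute (hXc i j))
      (by
        intro A hA
        obtain ⟨i, rfl⟩ := (List.mem_ofFn' _ _).mp hA
        exact avg_herm (hXd i) (hXu i))
      (by
        intro A hA
        obtain ⟨i, rfl⟩ := (List.mem_ofFn' _ _).mp hA
        exact avg_conj_mul (avg_fix (hXd i)))
    have hσ' : σ = (((((d : ℝ) ^ (n - r))⁻¹ : ℝ)) : ℂ) • l.prod := by
      rw [hσ]
      push_cast
      rfl
    rw [hσ'] at hsupp
    have hρP := mul_proj_of_suppLE h2 hsupp
    rw [hrel, hσ', relEnt_proj hρ (by positivity) h1 h2 hρP]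
    have hfix : ∀ i, ρ * X i = ρ := by
      intro i
      have h4 : ρ * avg (X i) = ρ := by
        have h5 := h3 (avg (X i)) ((List.mem_ofFn' _ _).mpr ⟨i, rfl⟩)
        conv_lhs => rw [← hρP, mul_assoc, h5, hρP]
      have h6 : Commute (avg (X i)) (X i) := by
        unfold avg
        apply Commute.smul_left
        apply Commute.sum_left
        intro k _
        exact Commute.pow_self _ _
      conv_lhs => rw [← h4, mul_assoc, h6.eq, avg_fix (hXd i), h4]
    have hle : d ^ r ≤ N := by
      rw [← hcard, hN]
      apply Nat.card_mono (Set.toFinite _)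
      rw [SetLike.coe_subset_coe, AddSubgroup.closure_le]
      rintro _ ⟨i, rfl⟩
      have hne : ch d (x i) ≠ 0 := Complex.exp_ne_zero _
      refine ⟨(ch d (x i))⁻¹, ?_⟩
      conv_rhs => rw [← hfix i, hX]
      rw [mul_smul_comm, smul_smul, inv_mul_cancel₀ hne, one_smul]
    rw [EReal.coe_le_coe_iff]
    have hle' : ((d : ℝ) ^ (n - r))⁻¹ ≤ (N : ℝ) / (d : ℝ) ^ n := by
      have h7 : (d : ℝ) ^ r ≤ N := by exact_mod_cast hle
      have h8 : (d : ℝ) ^ n = (d : ℝ) ^ (n - r) * (d : ℝ) ^ r := by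
        rw [← pow_add, Nat.sub_add_cancel hr]
      rw [h8, inv_eq_one_div, div_le_div_iff₀ (by positivity) (by positivity)]
      nlinarith [pow_pos hd0 (n - r)]
    have := Real.log_le_log (by positivity) hle'
    linarith

end PaperQI
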